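/- For every m > 0, setting r = 2/(cosh m − 1) > 0, one has K(r) = 2m·(cosh m − 1)/(cosh m + 1). Equivalently, K = z ∘ w⁻¹ on (0, +∞), where w(m) = 2/(cosh m − 1) and z(m) = 2m·c(m) for m > 0. -/

import Mathlib

/-- The threshold function `K(r) = (2/(1+r))·log(1 + (2/r)(1 + √(1+r)))`. -/
noncomputable def Kfun (r : ℝ) : ℝ :=
  (2 / (1 + r)) * Real.log (1 + (2 / r) * (1 + Real.sqrt (1 + r)))

/-!
The logarithm in `K(r)` is the logarithmic form of `arcosh (1 + 2 / r)`, and `r = 2 / (cosh m - 1)`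
is the solution of `1 + 2 / r = cosh m`.
-/

theorem sqrt_one_add_two_div_sq_sub_one {r : ℝ} (hr : 0 < r) :
    √((1 + 2 / r) ^ 2 - 1) = 2 / r * √(1 + r) := by
  have h_sq : (1 + 2 / r) ^ 2 - 1 = (2 / r) ^ 2 * (1 + r) := by
    field_simp
    ring
  rw [h_sq, Real.sqrt_mul (sq_nonneg _), Real.sqrt_sq (by positivity)]

theorem Kfun_eq_mul_arcosh {r : ℝ} (hr : 0 < r) :
    Kfun r = 2 / (1 + r) * Real.arcosh (1 + 2 / r) := by
  rw [Kfun, Real.arcosh, sqrt_one_add_two_div_sq_sub_one hr, mul_one_add, add_assoc]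

theorem Kfun_two_div_sub_one {x : ℝ} (hx : 1 < x) :
    Kfun (2 / (x - 1)) = 2 * (x - 1) / (x + 1) * Real.arcosh x := by
  have hx' : 0 < x - 1 := sub_pos.mpr hx
  have h_coeff : 2 / (1 + 2 / (x - 1)) = 2 * (x - 1) / (x + 1) := by
    rw [one_add_div hx'.ne', div_div_eq_mul_div]
    ring
  rw [Kfun_eq_mul_arcosh (div_pos two_pos hx'), div_div_cancel₀ two_ne_zero, add_sub_cancel,
    h_coeff]

/-- For `m > 0` and `r = 2/(cosh m − 1) > 0`, one has `K(r) = 2m(cosh m − 1)/(cosh m + 1)`,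
i.e. `K = z ∘ w⁻¹` with `w(m) = 2/(cosh m − 1)` and `z(m) = 2m·c(m)`. -/
theorem stmt12 (m : ℝ) (hm : 0 < m) :
    0 < 2 / (Real.cosh m - 1) ∧
    Kfun (2 / (Real.cosh m - 1)) = 2 * m * (Real.cosh m - 1) / (Real.cosh m + 1) := by
  have h_cosh : 1 < Real.cosh m := Real.one_lt_cosh.mpr hm.ne'
  refine ⟨div_pos two_pos (sub_pos.mpr h_cosh), ?_⟩
  rw [Kfun_two_div_sub_one h_cosh, Real.arcosh_cosh hm.le]
  ring
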